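/- Let h ≥ 1, let R be a commutative ring, and let M_{ij} ∈ R be given for 1 ≤ i < j ≤ h. Then Σ over all unordered set partitions {U1, …, Ut} of {1, …, h} into nonempty blocks of (−1)^{t−1}(t−1)! Π_{r=1}^{t} Π_{i<j, i,j∈Ur} (1 + M_{ij}) = Σ_{Ω} Π_{{i,j}∈Ω} M_{ij}, where the sum on the right runs over all sets Ω of unordered pairs of distinct elements of {1, …, h} such that the graph with vertex set {1, …, h} and edge set Ω is connected. -/

import Mathlib

/-!
Set partitions of a finite type are the same as equivalence relations on it, and the block product
attached to an equivalence relation `s` is the product of `1 + M i j` over the pairs `i < j` with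
`s i j`. Expanding this product turns the left-hand side into a sum over edge sets `E`, in which the
monomial of `E` has the coefficient `∑ (-1) ^ (t - 1) * (t - 1)!` over all equivalence relations
containing `E`, where `t` is the number of classes. These are the relations coarser than the
reachability relation of the graph of `E`, hence (`Setoid.correspondence`) the equivalence relations
on its set of components.

It remains to see that the sum of `(-1) ^ (t - 1) * (t - 1)!` over all equivalence relations on a
nonempty finite type of cardinality `k` is `1` if `k = 1` and `0` otherwise
(`sum_setoid_blockWeight`). Classifying the maps into an `n`-element set by their kernel gives
`∑ n (n - 1) ⋯ (n - t + 1) = n ^ k` for every `n`, which is an identity of polynomials in `n`, and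
`(-1) ^ (t - 1) * (t - 1)!` is the linear coefficient of the falling factorial `n ⋯ (n - t + 1)`.
-/

open Finset

noncomputable section

open scoped Classical

/-- `P` is an (unordered) set partition of `{0, …, h-1}` into nonempty blocks. -/
def IsSetPartition {h : ℕ} (P : Finset (Finset (Fin h))) : Prop :=
  (∀ U ∈ P, U.Nonempty) ∧ ∀ i : Fin h, ∃! U : Finset (Fin h), U ∈ P ∧ i ∈ U

/-! ### The signed count of equivalence relations -/

/-- The coefficient `(-1) ^ (t - 1) * (t - 1)!` of a partition into `t` blocks. -/
def blockWeight (t : ℕ) : ℤ := (-1) ^ (t - 1) * ((t - 1).factorial : ℤ)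

lemma finite_setoid (α : Type*) [Finite α] : Finite (Setoid α) :=
  Finite.of_injective (fun s : Setoid α => fun a b => s a b)
    fun _ _ h => Setoid.ext fun a b => iff_of_eq (congrFun (congrFun h a) b)

instance fintypeSetoid (α : Type*) [Finite α] : Fintype (Setoid α) :=
  have := finite_setoid α
  Fintype.ofFinite _

lemma descPochhammer_eval_neg_one (n : ℕ) :
    (descPochhammer ℤ n).eval (-1) = (-1) ^ n * (n.factorial : ℤ) := by
  induction n with
  | zero => simp
  | succ n ih =>
    rw [descPochhammer_succ_right]
    simp [ih, Nat.factorial_succ, pow_succ]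
    ring

lemma descPochhammer_coeff_one (t : ℕ) (ht : t ≠ 0) :
    (descPochhammer ℤ t).coeff 1 = blockWeight t := by
  obtain ⟨n, rfl⟩ := Nat.exists_eq_succ_of_ne_zero ht
  have h : (descPochhammer ℤ (n + 1)).coeff (0 + 1) = (-1) ^ n * (n.factorial : ℤ) := by
    rw [descPochhammer_succ_left, Polynomial.coeff_X_mul, Polynomial.coeff_zero_eq_eval_zero,
      Polynomial.eval_comp]
    simpa using descPochhammer_eval_neg_one n
  simpa [blockWeight] using h

/-- Maps with kernel `s` are the same as embeddings of the quotient by `s`. -/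
def kerFiberEquiv {α β : Type*} (s : Setoid α) :
    {f : α → β // Setoid.ker f = s} ≃ (Quotient s ↪ β) where
  toFun f := ⟨Quotient.lift f.1 fun a b hab => by
      have h : Setoid.ker f.1 a b := by rw [f.2]; exact hab
      exact h, by
    rintro ⟨a⟩ ⟨b⟩ hab
    apply Quotient.sound
    have h : Setoid.ker f.1 a b := hab
    rw [f.2] at h
    exact h⟩
  invFun g := ⟨fun a => g (Quotient.mk s a), by
    ext a b
    rw [Setoid.ker_def, g.injective.eq_iff]
    exact Quotient.eq⟩
  left_inv f := rfl
  right_inv g := by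
    ext ⟨a⟩
    rfl

/-- The maps from `α` to an `n`-element set, counted according to their kernel. -/
lemma sum_setoid_descFactorial (α : Type*) [Finite α] (n : ℕ) :
    ∑ s : Setoid α, n.descFactorial (Nat.card (Quotient s)) = n ^ Nat.card α := by
  have := Fintype.ofFinite α
  have h := Fintype.card_congr (Equiv.sigmaFiberEquiv (Setoid.ker : (α → Fin n) → Setoid α))
  rw [Fintype.card_sigma, Fintype.card_fun, Fintype.card_fin] at h
  rw [Nat.card_eq_fintype_card, ← h]
  refine Finset.sum_congr rfl fun s _ => ?_
  rw [Fintype.card_congr (kerFiberEquiv s), Fintype.card_embedding_eq, Fintype.card_fin,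
    Nat.card_eq_fintype_card]

/-- The identity `sum_setoid_descFactorial`, valid for all natural numbers `n`, as an identity of
polynomials. -/
lemma sum_setoid_descPochhammer (α : Type*) [Finite α] :
    ∑ s : Setoid α, descPochhammer ℤ (Nat.card (Quotient s))
      = (Polynomial.X : Polynomial ℤ) ^ Nat.card α := by
  apply Polynomial.eq_of_infinite_eval_eq
  refine Set.Infinite.mono ?_ (Set.infinite_range_of_injective (Nat.cast_injective (R := ℤ)))
  rintro _ ⟨n, rfl⟩
  simp only [Set.mem_ofPred_eq, Polynomial.eval_finsetSum, Polynomial.eval_pow, Polynomial.eval_X,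
    descPochhammer_eval_eq_descFactorial]
  exact_mod_cast sum_setoid_descFactorial α n

/-- Comparison of the linear coefficients in `sum_setoid_descPochhammer`. -/
lemma sum_setoid_blockWeight (α : Type*) [Finite α] [Nonempty α] :
    ∑ s : Setoid α, blockWeight (Nat.card (Quotient s)) = if Nat.card α = 1 then 1 else 0 := by
  have h := congrArg (fun p => Polynomial.coeff p 1) (sum_setoid_descPochhammer α)
  simp only [Polynomial.finsetSum_coeff, Polynomial.coeff_X_pow] at h
  simp only [eq_comm (a := 1)] at h
  rw [← h]
  refine Finset.sum_congr rfl fun s _ => (descPochhammer_coeff_one _ ?_).symm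
  have : Nonempty (Quotient s) := ⟨Quotient.mk s (Classical.arbitrary α)⟩
  exact Nat.card_pos.ne'

/-! ### Equivalence relations coarser than reachability -/

lemma card_quotient_correspondence {α : Type*} (r : Setoid α) (s : {s : Setoid α // r ≤ s}) :
    Nat.card (Quotient (Setoid.correspondence r s)) = Nat.card (Quotient s.1) := by
  rw [← Nat.card_congr (Setoid.quotientQuotientEquivQuotient r s.1 s.2)]
  congr 2
  ext x y
  induction x, y using Quotient.inductionOn₂ with
  | h a b => exact (Quotient.eq (r := s.1)).symm

lemma sum_coarser_blockWeight {α : Type*} [Finite α] [Nonempty α] (r : Setoid α) :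
    ∑ s : Setoid α with r ≤ s, blockWeight (Nat.card (Quotient s))
      = if Nat.card (Quotient r) = 1 then 1 else 0 := by
  have : Nonempty (Quotient r) := ⟨Quotient.mk r (Classical.arbitrary α)⟩
  rw [← sum_setoid_blockWeight (Quotient r),
    ← Equiv.sum_comp (Setoid.correspondence r).toEquiv, Finset.sum_subtype (p := fun s => r ≤ s)]
  · exact Finset.sum_congr rfl fun s _ =>
      congrArg blockWeight (card_quotient_correspondence r s).symm
  · simp

lemma reachableSetoid_fromRel_le_iff {α : Type*} (rel : α → α → Prop) (s : Setoid α) :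
    (SimpleGraph.fromRel rel).reachableSetoid ≤ s ↔ ∀ a b, rel a b → s a b := by
  constructor
  · intro h a b hab
    by_cases hne : a = b
    · exact hne ▸ s.refl a
    · refine h (SimpleGraph.Adj.reachable ?_)
      exact ⟨hne, Or.inl hab⟩
  · rintro h a b ⟨w⟩
    induction w with
    | nil => exact s.refl _
    | cons hadj _ ih =>
      obtain ⟨_, h1 | h1⟩ := hadj
      · exact s.trans (h _ _ h1) ih
      · exact s.trans (s.symm (h _ _ h1)) ih

lemma connected_iff_card_quotient {α : Type*} [Finite α] [Nonempty α] (G : SimpleGraph α) :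
    Nat.card (Quotient G.reachableSetoid) = 1 ↔ G.Connected := by
  rw [Nat.card_eq_one_iff_unique]
  constructor
  · rintro ⟨h, _⟩
    exact ⟨fun a b => Quotient.exact (h.elim (Quotient.mk G.reachableSetoid a)
      (Quotient.mk G.reachableSetoid b))⟩
  · intro h
    refine ⟨⟨?_⟩, ⟨Quotient.mk _ (Classical.arbitrary α)⟩⟩
    rintro ⟨a⟩ ⟨b⟩
    exact Quotient.sound (h.preconnected a b)

/-! ### Set partitions as equivalence relations -/

/-- The class of `i` under `s`, as a finset. -/
def block {h : ℕ} (s : Setoid (Fin h)) (i : Fin h) : Finset (Fin h) :=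
  Finset.univ.filter fun j => s i j

/-- The set of classes of `s`. -/
def blocks {h : ℕ} (s : Setoid (Fin h)) : Finset (Finset (Fin h)) :=
  Finset.univ.image (block s)

lemma mem_block {h : ℕ} {s : Setoid (Fin h)} {i j : Fin h} : j ∈ block s i ↔ s i j := by
  simp [block]

lemma block_eq_iff {h : ℕ} {s : Setoid (Fin h)} {i j : Fin h} :
    block s i = block s j ↔ s i j := by
  constructor
  · intro hij
    exact mem_block.1 (hij ▸ mem_block.2 (s.refl j))
  · intro hij
    ext k
    rw [mem_block, mem_block]
    exact ⟨fun hk => s.trans (s.symm hij) hk, fun hk => s.trans hij hk⟩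

lemma isSetPartition_blocks {h : ℕ} (s : Setoid (Fin h)) : IsSetPartition (blocks s) := by
  constructor
  · intro U hU
    obtain ⟨i, -, rfl⟩ := Finset.mem_image.1 hU
    exact ⟨i, mem_block.2 (s.refl i)⟩
  · intro i
    refine ⟨block s i, ⟨Finset.mem_image_of_mem _ (Finset.mem_univ i), mem_block.2 (s.refl i)⟩, ?_⟩
    rintro U ⟨hU, hi⟩
    obtain ⟨j, -, rfl⟩ := Finset.mem_image.1 hU
    exact block_eq_iff.2 (mem_block.1 hi)

lemma rel_iff_exists_mem_blocks {h : ℕ} (s : Setoid (Fin h)) (i j : Fin h) :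
    s i j ↔ ∃ U ∈ blocks s, i ∈ U ∧ j ∈ U := by
  constructor
  · intro hij
    exact ⟨block s i, Finset.mem_image_of_mem _ (Finset.mem_univ i), mem_block.2 (s.refl i),
      mem_block.2 hij⟩
  · rintro ⟨U, hU, hi, hj⟩
    obtain ⟨k, -, rfl⟩ := Finset.mem_image.1 hU
    exact s.trans (s.symm (mem_block.1 hi)) (mem_block.1 hj)

lemma blocks_injective {h : ℕ} : Function.Injective (blocks (h := h)) := by
  intro s t hst
  ext i j
  rw [rel_iff_exists_mem_blocks, rel_iff_exists_mem_blocks, hst]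

lemma exists_blocks_eq {h : ℕ} (P : Finset (Finset (Fin h))) (hP : IsSetPartition P) :
    ∃ s, blocks s = P := by
  choose f hf hu using hP.2
  have hmem : ∀ i j, j ∈ f i ↔ f i = f j := fun i j =>
    ⟨fun hj => hu j (f i) ⟨(hf i).1, hj⟩, fun hij => hij ▸ (hf j).2⟩
  have hb : ∀ i, block (Setoid.ker f) i = f i := by
    intro i
    ext j
    rw [mem_block, Setoid.ker_def, hmem]
  refine ⟨Setoid.ker f, ?_⟩
  ext U
  constructor
  · intro hU
    obtain ⟨i, -, rfl⟩ := Finset.mem_image.1 hU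
    rw [hb]
    exact (hf i).1
  · intro hU
    obtain ⟨i, hi⟩ := hP.1 U hU
    refine Finset.mem_image.2 ⟨i, Finset.mem_univ i, ?_⟩
    rw [hb]
    exact (hu i U ⟨hU, hi⟩).symm

lemma card_blocks {h : ℕ} (s : Setoid (Fin h)) : (blocks s).card = Nat.card (Quotient s) := by
  have hs : s = Setoid.ker (block s) := by
    ext i j
    rw [Setoid.ker_def, block_eq_iff]
  calc (blocks s).card = Nat.card (Set.range (block s)) := by
        rw [← Set.image_univ, ← Finset.coe_univ, ← Finset.coe_image, Nat.card_coe_set_eq,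
          Set.ncard_coe_finset, blocks]
    _ = Nat.card (Quotient (Setoid.ker (block s))) :=
        (Nat.card_congr (Setoid.quotientKerEquivRange (block s))).symm
    _ = Nat.card (Quotient s) := by rw [← hs]

lemma prod_blocks {h : ℕ} {R : Type*} [CommRing R] (F : Fin h × Fin h → R) (s : Setoid (Fin h)) :
    ∏ U ∈ blocks s, ∏ p ∈ Finset.univ.filter
        (fun p : Fin h × Fin h => p.1 < p.2 ∧ p.1 ∈ U ∧ p.2 ∈ U), F p
      = ∏ p ∈ Finset.univ.filter (fun p : Fin h × Fin h => p.1 < p.2 ∧ s p.1 p.2), F p := by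
  rw [← Finset.prod_biUnion]
  · refine Finset.prod_congr ?_ fun _ _ => rfl
    ext p
    simp only [Finset.mem_biUnion, Finset.mem_filter, Finset.mem_univ, true_and,
      rel_iff_exists_mem_blocks s]
    tauto
  · intro U hU V hV hUV
    rw [Function.onFun, Finset.disjoint_left]
    intro p hpU hpV
    simp only [Finset.mem_filter, Finset.mem_univ, true_and] at hpU hpV
    exact hUV (((isSetPartition_blocks s).2 p.1).unique ⟨hU, hpU.2.1⟩ ⟨hV, hpV.2.1⟩)

lemma sum_isSetPartition {h : ℕ} {R : Type*} [CommRing R] (F : Finset (Finset (Fin h)) → R) :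
    ∑ P ∈ Finset.univ.filter (fun P : Finset (Finset (Fin h)) => IsSetPartition P), F P
      = ∑ s : Setoid (Fin h), F (blocks s) := by
  symm
  refine Finset.sum_bij (fun s _ => blocks s) (fun s _ => ?_) (fun s _ t _ hst => ?_)
    (fun P hP => ?_) (fun _ _ => rfl)
  · exact Finset.mem_filter.2 ⟨Finset.mem_univ _, isSetPartition_blocks s⟩
  · exact blocks_injective hst
  · obtain ⟨s, hs⟩ := exists_blocks_eq P (Finset.mem_filter.1 hP).2
    exact ⟨s, Finset.mem_univ s, hs⟩

/-- The coefficient of the monomial of an edge set `E` after expanding all block products: `E`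
occurs in the product for `s` exactly when `s` relates the two ends of every pair in `E`. -/
lemma sum_setoid_containing {h : ℕ} (hh : 1 ≤ h) (E : Finset (Fin h × Fin h)) :
    ∑ s : Setoid (Fin h) with ∀ p ∈ E, s p.1 p.2, blockWeight (Nat.card (Quotient s))
      = if (SimpleGraph.fromRel (fun i j => (i, j) ∈ E)).Connected then 1 else 0 := by
  have : Nonempty (Fin h) := ⟨⟨0, hh⟩⟩
  have key := sum_coarser_blockWeight (SimpleGraph.fromRel (fun i j => (i, j) ∈ E)).reachableSetoid
  simp only [connected_iff_card_quotient, reachableSetoid_fromRel_le_iff] at key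
  rw [← key]
  refine Finset.sum_congr ?_ fun _ _ => rfl
  ext s
  simp [Prod.forall]

/-- the partition/connected-graph expansion.  Edge sets `Ω` are
represented as finsets of ordered pairs `(i, j)` with `i < j`, and the associated
graph is `SimpleGraph.fromRel (fun i j => (i, j) ∈ Ω)`. -/
theorem statement16 (h : ℕ) (hh : 1 ≤ h) (R : Type*) [CommRing R]
    (Mij : Fin h → Fin h → R) :
    ∑ P ∈ Finset.univ.filter (fun P : Finset (Finset (Fin h)) => IsSetPartition P),
        (-1 : R) ^ (P.card - 1) * ((P.card - 1).factorial : R) *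
          ∏ U ∈ P, ∏ p ∈ Finset.univ.filter
              (fun p : Fin h × Fin h => p.1 < p.2 ∧ p.1 ∈ U ∧ p.2 ∈ U),
            (1 + Mij p.1 p.2)
      = ∑ E ∈ Finset.univ.filter (fun E : Finset (Fin h × Fin h) =>
            (∀ p ∈ E, p.1 < p.2) ∧
              (SimpleGraph.fromRel (fun i j => (i, j) ∈ E)).Connected),
          ∏ p ∈ E, Mij p.1 p.2 := by
  rw [sum_isSetPartition]
  -- The summand of `s`, expanded over all edge sets; those not contained in `s` contribute zero,
  -- so that the index set does not depend on `s` and the two sums can be exchanged.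
  have hterm : ∀ s : Setoid (Fin h),
      (-1 : R) ^ ((blocks s).card - 1) * (((blocks s).card - 1).factorial : R) *
          ∏ U ∈ blocks s, ∏ p ∈ Finset.univ.filter
              (fun p : Fin h × Fin h => p.1 < p.2 ∧ p.1 ∈ U ∧ p.2 ∈ U), (1 + Mij p.1 p.2)
        = ∑ E : Finset (Fin h × Fin h) with ∀ p ∈ E, p.1 < p.2,
            if ∀ p ∈ E, s p.1 p.2 then
              ((blockWeight (Nat.card (Quotient s)) : ℤ) : R) * ∏ p ∈ E, Mij p.1 p.2
            else 0 := by
    intro s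
    rw [prod_blocks (fun p => 1 + Mij p.1 p.2), Finset.prod_one_add, Finset.mul_sum,
      ← Finset.sum_filter, Finset.filter_filter, card_blocks]
    refine Finset.sum_congr ?_ fun E _ => by simp [blockWeight]
    ext E
    simp only [Finset.mem_powerset, Finset.subset_iff, Finset.mem_filter, Finset.mem_univ, true_and]
    exact forall₂_and
  rw [Finset.sum_congr rfl fun s _ => hterm s, Finset.sum_comm, ← Finset.filter_filter,
    Finset.sum_filter (fun E : Finset (Fin h × Fin h) =>
      (SimpleGraph.fromRel (fun i j => (i, j) ∈ E)).Connected)]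
  refine Finset.sum_congr rfl fun E _ => ?_
  rw [← Finset.sum_filter, ← Finset.sum_mul, ← Int.cast_sum, sum_setoid_containing hh E]
  split_ifs <;> simp
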